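/- arXiv:2101.04940 — 2 statements merged into one kernel-verified Lean document; each statement's English description precedes it below -/
import Mathlib

section
/- For every integer ℓ ≥ 1 and every real ρ with 0 < ρ < 1 there exists a real α with 0 ≤ α < 1, depending only on ℓ and ρ, with the following property: for every Lebesgue-measurable set T ⊆ ℝ³ with B(0,ρ) ⊆ T ⊆ B(0,1), every real polynomial q in three variables of total degree at most ℓ+1, and every polynomial vector field p : ℝ³ → ℝ³ whose components have total degree at most ℓ−1, one has |∫_T ⟨∇q(x), x × p(x)⟩ dx| ≤ α (∫_T ‖∇q(x)‖² dx)^{1/2} (∫_T ‖x × p(x)‖² dx)^{1/2}. (This is the normalized, bilinear form of the uniform bound ‖π_{G}π_{Gᶜ}‖ ≤ α < 1 for the L²(T)-orthogonal projections onto the gradient space G^ℓ(T) = ∇P^{ℓ+1} and its Koszul complement Gᶜ,ℓ(T) = x × (P^{ℓ−1})³.) -/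
open MvPolynomial MeasureTheory
open scoped InnerProductSpace

/-- The cross product of two vectors of `ℝ³` (as elements of `EuclideanSpace ℝ (Fin 3)`). -/
noncomputable def crossVec (a b : EuclideanSpace ℝ (Fin 3)) : EuclideanSpace ℝ (Fin 3) :=
  (WithLp.equiv 2 (Fin 3 → ℝ)).symm
    ![a 1 * b 2 - a 2 * b 1, a 2 * b 0 - a 0 * b 2, a 0 * b 1 - a 1 * b 0]

/-- The gradient of a polynomial in three variables, evaluated at a point of `ℝ³`. -/
noncomputable def polyGrad (q : MvPolynomial (Fin 3) ℝ) (x : EuclideanSpace ℝ (Fin 3)) :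
    EuclideanSpace ℝ (Fin 3) :=
  (WithLp.equiv 2 (Fin 3 → ℝ)).symm fun i => eval (fun j => x j) (pderiv i q)

/-- Evaluation of a polynomial vector field at a point of `ℝ³`. -/
noncomputable def polyVecEval (p : Fin 3 → MvPolynomial (Fin 3) ℝ)
    (x : EuclideanSpace ℝ (Fin 3)) : EuclideanSpace ℝ (Fin 3) :=
  (WithLp.equiv 2 (Fin 3 → ℝ)).symm fun i => eval (fun j => x j) (p i)

/-- A linear map into a normed space is dominated by another one on a finite-dimensional space
as soon as its kernel is larger. -/
theorem LinearMap.exists_norm_le_mul_norm_of_ker_le {W E F : Type*} [AddCommGroup W] [Module ℝ W]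
    [FiniteDimensional ℝ W] [NormedAddCommGroup E] [NormedSpace ℝ E] [NormedAddCommGroup F]
    [NormedSpace ℝ F] (A : W →ₗ[ℝ] E) (B : W →ₗ[ℝ] F) (h : LinearMap.ker A ≤ LinearMap.ker B) :
    ∃ C : ℝ, ∀ w, ‖B w‖ ≤ C * ‖A w‖ := by
  obtain ⟨g, hg⟩ := A.rangeRestrict.exists_rightInverse_of_surjective A.range_rangeRestrict
  let f := LinearMap.toContinuousLinearMap (B ∘ₗ g)
  refine ⟨‖f‖, fun w => ?_⟩
  have hA : A (g (A.rangeRestrict w)) = A w :=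
    congrArg Subtype.val (LinearMap.congr_fun hg (A.rangeRestrict w))
  have hB : B (g (A.rangeRestrict w)) = B w := by
    rw [← sub_eq_zero, ← map_sub, ← LinearMap.mem_ker]
    apply h
    rw [LinearMap.mem_ker, map_sub, hA, sub_self]
  calc ‖B w‖ = ‖f (A.rangeRestrict w)‖ := by rw [← hB]; rfl
    _ ≤ ‖f‖ * ‖A w‖ := f.le_opNorm _

namespace MvPolynomial

/-- The Euler operator multiplies each coefficient by the degree of its monomial. -/
theorem coeff_sum_X_mul_pderiv {σ R : Type*} [Fintype σ] [CommSemiring R] (q : MvPolynomial σ R)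
    (m : σ →₀ ℕ) : coeff m (∑ i, X i * pderiv i q) = (∑ i, m i) • coeff m q := by
  classical
  induction q using MvPolynomial.induction_on' with
  | monomial u a =>
    simp_rw [X_mul_pderiv_monomial, ← Finset.sum_smul, coeff_smul, coeff_monomial]
    split_ifs with h
    · rw [h]
    · simp
  | add p q hp hq =>
    simp only [map_add, mul_add, Finset.sum_add_distrib, coeff_add, hp, hq, smul_add]

theorem pderiv_eq_zero_of_sum_X_mul_pderiv_eq_zero {σ : Type*} [Fintype σ]
    {q : MvPolynomial σ ℝ} (h : ∑ i, X i * pderiv i q = 0) (i : σ) : pderiv i q = 0 := by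
  classical
  suffices q = C (coeff 0 q) by rw [this, pderiv_C]
  ext m
  rw [coeff_C]
  split_ifs with hm
  · rw [hm]
  · have h1 := coeff_sum_X_mul_pderiv q m
    rw [h, coeff_zero, eq_comm, smul_eq_zero] at h1
    refine h1.resolve_left fun h0 => hm ?_
    ext j
    simpa using (Finset.sum_eq_zero_iff.1 h0 j (Finset.mem_univ j)).symm

theorem eq_zero_of_eval_eq_zero_on_ball {ρ : ℝ} (hρ : 0 < ρ) {q : MvPolynomial (Fin 3) ℝ}
    (h : ∀ x ∈ Metric.ball (0 : EuclideanSpace ℝ (Fin 3)) ρ, eval (fun j => x j) q = 0) :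
    q = 0 := by
  refine funext_set (fun _ => Set.Ioo (-(ρ / 2)) (ρ / 2))
    (fun _ => Set.Ioo_infinite (by linarith)) fun y hy => ?_
  rw [map_zero]
  refine h (WithLp.toLp 2 y) ?_
  have hsq : ∀ i, y i ^ 2 ≤ (ρ / 2) ^ 2 := fun i => by
    have := hy i (Set.mem_univ i)
    exact sq_le_sq' this.1.le this.2.le
  rw [mem_ball_zero_iff, ← abs_of_pos hρ, ← abs_norm, ← sq_lt_sq, EuclideanSpace.norm_sq_eq]
  simp only [Real.norm_eq_abs, sq_abs, Fin.sum_univ_three]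
  nlinarith [hsq 0, hsq 1, hsq 2]

end MvPolynomial

theorem inner_crossVec_right (b x : EuclideanSpace ℝ (Fin 3)) :
    ⟪x, crossVec x b⟫_ℝ = 0 := by
  simp [crossVec, PiLp.inner_apply, Fin.sum_univ_three]
  ring

theorem continuous_eval_coord (q : MvPolynomial (Fin 3) ℝ) :
    Continuous fun x : EuclideanSpace ℝ (Fin 3) => eval (fun j => x j) q :=
  (MvPolynomial.continuous_eval q).comp (by fun_prop)

/-- The gradient as a linear map into continuous vector fields. -/
noncomputable def gradLinear :
    MvPolynomial (Fin 3) ℝ →ₗ[ℝ] C(EuclideanSpace ℝ (Fin 3), EuclideanSpace ℝ (Fin 3)) where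
  toFun q := ⟨polyGrad q, (PiLp.continuous_toLp 2 _).comp
    (continuous_pi fun _ => continuous_eval_coord _)⟩
  map_add' p q := by
    ext x i
    change eval _ (pderiv i (p + q)) = eval _ (pderiv i p) + eval _ (pderiv i q)
    simp
  map_smul' c q := by
    ext x i
    change eval _ (pderiv i (c • q)) = c * eval _ (pderiv i q)
    simp

/-- The Koszul map `p ↦ x × p` as a linear map into continuous vector fields. -/
noncomputable def koszulLinear : (Fin 3 → MvPolynomial (Fin 3) ℝ) →ₗ[ℝ]
    C(EuclideanSpace ℝ (Fin 3), EuclideanSpace ℝ (Fin 3)) where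
  toFun p := ⟨fun x => crossVec x (polyVecEval p x), by
    have h := fun i => continuous_eval_coord (p i)
    refine (PiLp.continuous_toLp 2 _).comp (continuous_pi fun i => ?_)
    fin_cases i <;> simp [polyVecEval] <;> fun_prop⟩
  map_add' p q := by
    ext x i
    fin_cases i <;> simp [crossVec, polyVecEval] <;> ring
  map_smul' c q := by
    ext x i
    fin_cases i <;> simp [crossVec, polyVecEval] <;> ring

theorem koszulLinear_eq_zero_of_eqOn {ρ : ℝ} (hρ : 0 < ρ)
    {p : Fin 3 → MvPolynomial (Fin 3) ℝ}
    (h : Set.EqOn (koszulLinear p) 0 (Metric.ball 0 ρ)) : koszulLinear p = 0 := by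
  let v : Fin 3 → MvPolynomial (Fin 3) ℝ :=
    ![X 1 * p 2 - X 2 * p 1, X 2 * p 0 - X 0 * p 2, X 0 * p 1 - X 1 * p 0]
  have hv : ∀ x i, koszulLinear p x i = eval (fun j => x j) (v i) := fun x i => by
    fin_cases i <;> simp [v, koszulLinear, crossVec, polyVecEval]
  ext x i
  rw [hv, eq_zero_of_eval_eq_zero_on_ball hρ (q := v i) fun y hy => by rw [← hv, h hy]; rfl]
  simp

theorem gradLinear_eq_zero_of_eqOn_koszulLinear {ρ : ℝ} (hρ : 0 < ρ) {q : MvPolynomial (Fin 3) ℝ}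
    {p : Fin 3 → MvPolynomial (Fin 3) ℝ}
    (h : Set.EqOn (gradLinear q) (koszulLinear p) (Metric.ball 0 ρ)) : gradLinear q = 0 := by
  have hq : ∑ i, X i * pderiv i q = 0 := by
    refine eq_zero_of_eval_eq_zero_on_ball hρ fun x hx => ?_
    have h1 : ⟪x, polyGrad q x⟫_ℝ = 0 := by
      rw [show polyGrad q x = crossVec x (polyVecEval p x) from h hx]
      exact inner_crossVec_right _ x
    rw [← h1]
    simp [polyGrad, PiLp.inner_apply, mul_comm]
  ext x i
  change eval _ (pderiv i q) = 0
  rw [pderiv_eq_zero_of_sum_X_mul_pderiv_eq_zero hq i, map_zero]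

section Ball

variable {E F : Type*} [NormedAddCommGroup E] [MeasurableSpace E] [BorelSpace E]
  [ProperSpace E] [NormedAddCommGroup F] (μ : Measure E) [IsFiniteMeasureOnCompacts μ]

theorem ContinuousMap.memLp_restrict_ball [SecondCountableTopology E]
    (r : ℝ) (f : C(E, F)) (p : ENNReal) :
    MemLp f p (μ.restrict (Metric.ball 0 r)) := by
  have hK := isCompact_closedBall (0 : E) r
  have : IsFiniteMeasure (μ.restrict (Metric.ball (0 : E) r)) :=
    ⟨by simpa using Metric.isBounded_ball.measure_lt_top⟩
  obtain ⟨C, hC⟩ := hK.exists_bound_of_continuousOn f.continuous.continuousOn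
  exact MemLp.of_bound f.continuous.aestronglyMeasurable C
    ((ae_restrict_mem measurableSet_ball).mono fun x hx => hC x (Metric.ball_subset_closedBall hx))

/-- Restriction of continuous functions to a ball, as square-integrable functions. -/
noncomputable def ballToL2 [SecondCountableTopology E] [NormedSpace ℝ F] (r : ℝ) :
    C(E, F) →ₗ[ℝ] Lp F 2 (μ.restrict (Metric.ball 0 r)) where
  toFun f := (f.memLp_restrict_ball μ r 2).toLp f
  map_add' _ _ := rfl
  map_smul' _ _ := rfl

theorem norm_ballToL2_sq [SecondCountableTopology E] [InnerProductSpace ℝ F] (r : ℝ) (f : C(E, F)) :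
    ‖ballToL2 μ r f‖ ^ 2 = ∫ x in Metric.ball 0 r, ‖f x‖ ^ 2 ∂μ := by
  rw [← real_inner_self_eq_norm_sq, L2.inner_def]
  refine integral_congr_ae (((f.memLp_restrict_ball μ r 2).coeFn_toLp).mono fun x hx => ?_)
  change ⟪(f.memLp_restrict_ball μ r 2).toLp f x, (f.memLp_restrict_ball μ r 2).toLp f x⟫_ℝ = _
  rw [hx, real_inner_self_eq_norm_sq]

end Ball

/-- A quadratic inequality valid for all rescalings gives a strengthened Cauchy-Schwarz bound. -/
theorem abs_le_mul_sqrt_mul_sqrt_of_forall_scaling {a b s α : ℝ} (ha : 0 ≤ a) (hb : 0 ≤ b)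
    (hα : 0 ≤ α) (h : ∀ t : ℝ, 2 * t * s ≤ α * (a * t ^ 2 + b)) :
    |s| ≤ α * √a * √b := by
  have hd := discrim_le_zero (a := α * a) (b := -(2 * s)) (c := α * b)
    fun t => by linarith [h t]
  rw [discrim] at hd
  refine abs_le_of_sq_le_sq ?_ (by positivity)
  rw [mul_pow, mul_pow, Real.sq_sqrt ha, Real.sq_sqrt hb]
  linarith

/-- Gradients and Koszul fields of bounded degree are uniformly separated: the `L²` norm of a
difference on a small ball controls the `L²` norms of both terms on the unit ball. -/
theorem exists_grad_koszul_norm_le (m : ℕ) {ρ : ℝ} (hρ : 0 < ρ) :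
    ∃ K : ℝ, 1 ≤ K ∧ ∀ q ∈ restrictTotalDegree (Fin 3) ℝ m,
      ∀ p : Fin 3 → MvPolynomial (Fin 3) ℝ, (∀ i, p i ∈ restrictTotalDegree (Fin 3) ℝ m) →
      (∫ x in Metric.ball 0 1, ‖gradLinear q x‖ ^ 2) +
        (∫ x in Metric.ball 0 1, ‖koszulLinear p x‖ ^ 2) ≤
      K * ∫ x in Metric.ball 0 ρ, ‖gradLinear q x - koszulLinear p x‖ ^ 2 := by
  let P := restrictTotalDegree (Fin 3) ℝ m
  let G : P × (Fin 3 → P) →ₗ[ℝ] C(EuclideanSpace ℝ (Fin 3), EuclideanSpace ℝ (Fin 3)) :=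
    gradLinear ∘ₗ P.subtype ∘ₗ LinearMap.fst ℝ _ _
  let H : P × (Fin 3 → P) →ₗ[ℝ] C(EuclideanSpace ℝ (Fin 3), EuclideanSpace ℝ (Fin 3)) :=
    koszulLinear ∘ₗ P.subtype.compLeft (Fin 3) ∘ₗ LinearMap.snd ℝ _ _
  obtain ⟨C, hC⟩ := LinearMap.exists_norm_le_mul_norm_of_ker_le
    (ballToL2 volume ρ ∘ₗ (G - H)) ((ballToL2 volume 1 ∘ₗ G).prod (ballToL2 volume 1 ∘ₗ H)) (by
      intro w hw
      have h1 : Set.EqOn (G w) (H w) (Metric.ball 0 ρ) := by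
        refine Measure.eqOn_open_of_ae_eq (μ := volume) ?_ Metric.isOpen_ball
          (G w).continuous.continuousOn (H w).continuous.continuousOn
        have h2 : ballToL2 volume ρ ((G - H) w) = 0 := hw
        have h3 := ((G - H) w).memLp_restrict_ball volume ρ 2
        filter_upwards [h3.coeFn_toLp, Lp.coeFn_zero (EuclideanSpace ℝ (Fin 3)) 2
          (volume.restrict (Metric.ball (0 : EuclideanSpace ℝ (Fin 3)) ρ))] with x hx hx0
        rw [show h3.toLp _ = 0 from h2, hx0] at hx
        exact sub_eq_zero.1 hx.symm
      have hG : G w = 0 := gradLinear_eq_zero_of_eqOn_koszulLinear hρ h1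
      have hH : H w = 0 := koszulLinear_eq_zero_of_eqOn hρ (h1.symm.trans fun x _ => by simp [hG])
      simp [hG, hH])
  refine ⟨2 * C ^ 2 + 1, by nlinarith, fun q hq p hp => ?_⟩
  have h := hC (⟨q, hq⟩, fun i => ⟨p i, hp i⟩)
  have h1 := (norm_fst_le _).trans h
  have h2 := (norm_snd_le _).trans h
  have e1 := norm_ballToL2_sq volume 1 (gradLinear q)
  have e2 := norm_ballToL2_sq volume 1 (koszulLinear p)
  have e3 := norm_ballToL2_sq volume ρ (gradLinear q - koszulLinear p)
  simp only [ContinuousMap.sub_apply] at e3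
  rw [← e1, ← e2, ← e3]
  change ‖ballToL2 volume 1 (gradLinear q)‖ ≤
    C * ‖ballToL2 volume ρ (gradLinear q - koszulLinear p)‖ at h1
  change ‖ballToL2 volume 1 (koszulLinear p)‖ ≤
    C * ‖ballToL2 volume ρ (gradLinear q - koszulLinear p)‖ at h2
  have h1' := pow_le_pow_left₀ (norm_nonneg _) h1 2
  have h2' := pow_le_pow_left₀ (norm_nonneg _) h2 2
  rw [mul_pow] at h1' h2'
  nlinarith [sq_nonneg ‖ballToL2 volume ρ (gradLinear q - koszulLinear p)‖]

/-- Uniform bound `‖π_G π_{Gᶜ}‖ ≤ α < 1` for the `L²(T)`-orthogonal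
projections onto the gradient space `G^ℓ(T) = ∇P^{ℓ+1}` and its Koszul complement
`Gᶜ,ℓ(T) = x × (P^{ℓ−1})³`, in normalized bilinear form: for every measurable `T` with
`B(0,ρ) ⊆ T ⊆ B(0,1)`, every polynomial `q` of total degree `≤ ℓ+1` and every polynomial
vector field `p` of component degree `≤ ℓ−1`,
`|∫_T ⟨∇q, x × p⟩| ≤ α (∫_T ‖∇q‖²)^{1/2} (∫_T ‖x × p‖²)^{1/2}`. -/
theorem grad_koszul_projection_bound (ℓ : ℕ) (hℓ : 1 ≤ ℓ) (ρ : ℝ) (hρ0 : 0 < ρ) (hρ1 : ρ < 1) :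
    ∃ α : ℝ, 0 ≤ α ∧ α < 1 ∧
      ∀ T : Set (EuclideanSpace ℝ (Fin 3)), MeasurableSet T →
        Metric.ball 0 ρ ⊆ T → T ⊆ Metric.ball 0 1 →
        ∀ q : MvPolynomial (Fin 3) ℝ, q.totalDegree ≤ ℓ + 1 →
        ∀ p : Fin 3 → MvPolynomial (Fin 3) ℝ, (∀ i, (p i).totalDegree ≤ ℓ - 1) →
          abs (∫ x in T, ⟪polyGrad q x, crossVec x (polyVecEval p x)⟫_ℝ) ≤
            α * Real.sqrt (∫ x in T, ‖polyGrad q x‖ ^ 2) *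
              Real.sqrt (∫ x in T, ‖crossVec x (polyVecEval p x)‖ ^ 2) := by
  obtain ⟨K, hK, hKb⟩ := exists_grad_koszul_norm_le (ℓ + 1) hρ0
  have hK0 : 0 < K := one_pos.trans_le hK
  have hα : 0 ≤ 1 - K⁻¹ := sub_nonneg.2 (inv_le_one_of_one_le₀ hK)
  refine ⟨1 - K⁻¹, hα, by linarith [inv_pos.2 hK0], fun T hT hρT hT1 q hq p hp => ?_⟩
  have hL (f : C(EuclideanSpace ℝ (Fin 3), EuclideanSpace ℝ (Fin 3))) :
      MemLp f 2 (volume.restrict T) :=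
    (f.memLp_restrict_ball volume 1 2).mono_measure (Measure.restrict_mono_set _ hT1)
  have hI (f : C(EuclideanSpace ℝ (Fin 3), EuclideanSpace ℝ (Fin 3))) :
      IntegrableOn (fun x => ‖f x‖ ^ 2) T := (hL f).integrable_norm_pow two_ne_zero
  have hle (f : C(EuclideanSpace ℝ (Fin 3), EuclideanSpace ℝ (Fin 3))) :
      ∫ x in T, ‖f x‖ ^ 2 ≤ ∫ x in Metric.ball 0 1, ‖f x‖ ^ 2 :=
    setIntegral_mono_set ((f.memLp_restrict_ball volume 1 2).integrable_norm_pow two_ne_zero)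
      (Filter.Eventually.of_forall fun x => by positivity) hT1.eventuallyLE
  refine abs_le_mul_sqrt_mul_sqrt_of_forall_scaling (integral_nonneg fun x => by positivity)
    (integral_nonneg fun x => by positivity) hα fun t => ?_
  have hq' : t • q ∈ restrictTotalDegree (Fin 3) ℝ (ℓ + 1) :=
    Submodule.smul_mem _ t ((mem_restrictTotalDegree _ _ _).2 hq)
  have hmain := hKb (t • q) hq' p fun i =>
    (mem_restrictTotalDegree _ _ _).2 ((hp i).trans (by omega))
  have h3 : ∫ x in Metric.ball 0 ρ, ‖gradLinear (t • q) x - koszulLinear p x‖ ^ 2 ≤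
      ∫ x in T, ‖gradLinear (t • q) x - koszulLinear p x‖ ^ 2 :=
    setIntegral_mono_set (hI (gradLinear (t • q) - koszulLinear p))
      (Filter.Eventually.of_forall fun x => by positivity) hρT.eventuallyLE
  have h4 : ∫ x in T, ‖gradLinear (t • q) x‖ ^ 2 = t ^ 2 * ∫ x in T, ‖polyGrad q x‖ ^ 2 := by
    rw [← integral_const_mul]
    refine integral_congr_ae (Filter.Eventually.of_forall fun x => ?_)
    simp only [map_smul, ContinuousMap.smul_apply, norm_smul, mul_pow, Real.norm_eq_abs, sq_abs]
    rfl
  have hin : IntegrableOn (fun x => ⟪polyGrad q x, crossVec x (polyVecEval p x)⟫_ℝ) T :=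
    (((gradLinear q).continuous.inner
      (koszulLinear p).continuous).locallyIntegrable.integrableOn_isCompact
        (isCompact_closedBall 0 1)).mono_set (hT1.trans Metric.ball_subset_closedBall)
  have h5 : ∫ x in T, ‖gradLinear (t • q) x - koszulLinear p x‖ ^ 2 =
      (∫ x in T, ‖gradLinear (t • q) x‖ ^ 2) -
        2 * t * (∫ x in T, ⟪polyGrad q x, crossVec x (polyVecEval p x)⟫_ℝ) +
        ∫ x in T, ‖koszulLinear p x‖ ^ 2 := by
    rw [← integral_const_mul, ← integral_sub (hI _) (hin.const_mul _)]
    refine Eq.trans ?_ (integral_add ((hI _).sub (hin.const_mul _)) (hI _))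
    refine integral_congr_ae (Filter.Eventually.of_forall fun x => ?_)
    simp only [norm_sub_sq_real, map_smul, ContinuousMap.smul_apply, real_inner_smul_left, mul_assoc]
    rfl
  have h6 : ∫ x in T, ‖koszulLinear p x‖ ^ 2 =
      ∫ x in T, ‖crossVec x (polyVecEval p x)‖ ^ 2 := rfl
  have h7 := (add_le_add (hle (gradLinear (t • q))) (hle (koszulLinear p))).trans
    (hmain.trans (mul_le_mul_of_nonneg_left h3 hK0.le))
  rw [h5, h4, h6, ← inv_mul_le_iff₀ hK0] at h7
  linarith
end

section
/- For every integer ℓ ≥ 1 and every real ρ with 0 < ρ < 1 there exists a real α with 0 ≤ α < 1, depending only on ℓ and ρ, with the following property: for every Lebesgue-measurable set T ⊆ ℝ² with B(0,ρ) ⊆ T ⊆ B(0,1), every real polynomial q in two variables of total degree at most ℓ+1, and every real polynomial p in two variables of total degree at most ℓ−1, one has |∫_T ⟨∇q(x), p(x) x^⊥⟩ dx| ≤ α (∫_T ‖∇q(x)‖² dx)^{1/2} (∫_T ‖p(x) x^⊥‖² dx)^{1/2}, where x^⊥ := (x₂, −x₁). (This is the normalized, bilinear form of the uniform bound ‖π_S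 π_{Sᶜ}‖ ≤ α < 1 for the two-dimensional gradient space and its rotated Koszul complement on faces.) -/
open MvPolynomial MeasureTheory
open scoped InnerProductSpace

/-- Rotation of a vector of `ℝ²` by `−π/2`: `y ↦ (y₂, −y₁)`. -/
noncomputable def perpVec (y : EuclideanSpace ℝ (Fin 2)) : EuclideanSpace ℝ (Fin 2) :=
  (WithLp.equiv 2 (Fin 2 → ℝ)).symm ![y 1, -(y 0)]

/-- The gradient of a polynomial in two variables, evaluated at a point of `ℝ²`. -/
noncomputable def polyGrad2 (q : MvPolynomial (Fin 2) ℝ) (x : EuclideanSpace ℝ (Fin 2)) :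
    EuclideanSpace ℝ (Fin 2) :=
  (WithLp.equiv 2 (Fin 2 → ℝ)).symm fun i => eval (fun j => x j) (pderiv i q)

/-- On a finite-dimensional space of functions, one squared `L²` seminorm controls another one as
soon as its null space is smaller. -/
theorem exists_integral_norm_sq_le_of_ae_eq_zero_imp {F X H : Type*} [AddCommGroup F] [Module ℝ F]
    [FiniteDimensional ℝ F] [MeasurableSpace X] [NormedAddCommGroup H] [InnerProductSpace ℝ H]
    {μ ν : Measure X} (Φ Ψ : F →ₗ[ℝ] (X → H)) (hΦ : ∀ a, MemLp (Φ a) 2 μ)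
    (hΨ : ∀ a, MemLp (Ψ a) 2 ν) (h : ∀ a, Φ a =ᵐ[μ] 0 → Ψ a =ᵐ[ν] 0) :
    ∃ C : ℝ, 0 ≤ C ∧ ∀ a, ∫ x, ‖Ψ a x‖ ^ 2 ∂ν ≤ C * ∫ x, ‖Φ a x‖ ^ 2 ∂μ := by
  have key : ∀ {τ : Measure X} (f : X → H) (hf : MemLp f 2 τ),
      ‖hf.toLp f‖ ^ 2 = ∫ x, ‖f x‖ ^ 2 ∂τ := by
    intro τ f hf
    rw [← real_inner_self_eq_norm_sq, L2.inner_def]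
    refine integral_congr_ae ?_
    filter_upwards [hf.coeFn_toLp] with x hx
    rw [hx, real_inner_self_eq_norm_sq]
  have hzero : ∀ {τ : Measure X} {f : X → H} (hf : MemLp f 2 τ), hf.toLp f = 0 ↔ f =ᵐ[τ] 0 := by
    intro τ f hf
    rw [Lp.eq_zero_iff_ae_eq_zero]
    exact ⟨hf.coeFn_toLp.symm.trans, hf.coeFn_toLp.trans⟩
  let L : F →ₗ[ℝ] Lp H 2 μ :=
    { toFun := fun a => (hΦ a).toLp (Φ a)
      map_add' := fun a b => by
        rw [← MemLp.toLp_add]; exact MemLp.toLp_congr _ _ (by rw [map_add])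
      map_smul' := fun c a => by
        rw [RingHom.id_apply, ← MemLp.toLp_const_smul]
        exact MemLp.toLp_congr _ _ (by rw [map_smul]) }
  let M : F →ₗ[ℝ] Lp H 2 ν :=
    { toFun := fun a => (hΨ a).toLp (Ψ a)
      map_add' := fun a b => by
        rw [← MemLp.toLp_add]; exact MemLp.toLp_congr _ _ (by rw [map_add])
      map_smul' := fun c a => by
        rw [RingHom.id_apply, ← MemLp.toLp_const_smul]
        exact MemLp.toLp_congr _ _ (by rw [map_smul]) }
  have hker : LinearMap.ker L ≤ LinearMap.ker M := by
    intro a ha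
    have ha' : (hΦ a).toLp (Φ a) = 0 := ha
    change (hΨ a).toLp (Ψ a) = 0
    exact (hzero (hΨ a)).mpr (h a ((hzero (hΦ a)).mp ha'))
  let N : LinearMap.range L →L[ℝ] Lp H 2 ν := LinearMap.toContinuousLinearMap
    ((LinearMap.ker L).liftQ M hker ∘ₗ L.quotKerEquivRange.symm.toLinearMap)
  have hN : ∀ a, N ⟨L a, LinearMap.mem_range_self L a⟩ = M a := by
    intro a
    have : L.quotKerEquivRange.symm ⟨L a, LinearMap.mem_range_self L a⟩ =
        (LinearMap.ker L).mkQ a := LinearMap.quotKerEquivRange_symm_apply_image L a _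
    change (LinearMap.ker L).liftQ M hker (L.quotKerEquivRange.symm ⟨L a, _⟩) = _
    rw [this]
    simp
  refine ⟨‖N‖ ^ 2, by positivity, fun a => ?_⟩
  rw [← key _ (hΨ a), ← key _ (hΦ a), ← mul_pow]
  have := N.le_opNorm ⟨L a, LinearMap.mem_range_self L a⟩
  rw [hN] at this
  exact pow_le_pow_left₀ (norm_nonneg _) this 2

/-- A polynomial annihilated by the Euler operator has vanishing partial derivatives. -/
theorem pderiv_eq_zero_of_sum_X_mul_pderiv_eq_zero {σ : Type*} [Fintype σ] (q : MvPolynomial σ ℝ)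
    (h : ∑ i : σ, X i * pderiv i q = 0) (i : σ) : pderiv i q = 0 := by
  have hc : ∀ r : MvPolynomial σ ℝ, ∀ m : σ →₀ ℕ,
      coeff m (∑ i : σ, X i * pderiv i r) = (m.degree : ℝ) * coeff m r := by
    classical
    intro r m
    induction r using MvPolynomial.induction_on' with
    | monomial u a =>
      rw [(isHomogeneous_monomial a (rfl : u.degree = u.degree)).sum_X_mul_pderiv,
        coeff_smul, coeff_monomial]
      split_ifs with hu
      · subst hu; simp
      · simp
    | add r s hr hs =>
      simp only [map_add, mul_add, Finset.sum_add_distrib, coeff_add, hr, hs]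
  have hq : q = C (coeff 0 q) := by
    classical
    ext m
    rw [coeff_C]
    split_ifs with hm
    · rw [hm]
    · have := hc q m
      rw [h, coeff_zero] at this
      refine (mul_eq_zero.mp this.symm).resolve_left ?_
      rw [Nat.cast_eq_zero, Finsupp.degree_eq_zero_iff]
      exact fun h0 => hm h0.symm
  rw [hq, pderiv_C]

/-- A polynomial vanishing on a ball of positive radius centred at the origin is zero. -/
theorem eq_zero_of_eval_eq_zero_on_ball {ι : Type*} [Fintype ι] {ρ : ℝ} (hρ : 0 < ρ)
    (r : MvPolynomial ι ℝ)
    (h : ∀ x ∈ Metric.ball (0 : EuclideanSpace ℝ ι) ρ, eval (fun j => x j) r = 0) : r = 0 := by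
  have hopen : IsOpen ((WithLp.toLp 2 : (ι → ℝ) → EuclideanSpace ℝ ι) ⁻¹'
      Metric.ball (0 : EuclideanSpace ℝ ι) ρ) :=
    Metric.isOpen_ball.preimage (PiLp.continuous_toLp 2 _)
  obtain ⟨ε, hε, hsub⟩ := Metric.isOpen_iff.mp hopen 0 (by simpa using hρ)
  refine funext_set (fun _ => Metric.ball (0 : ℝ) ε) (fun _ => ?_) fun x hx => ?_
  · rw [Real.ball_eq_Ioo]
    exact Set.Ioo_infinite (by linarith)
  · rw [map_zero]
    refine h (WithLp.toLp 2 x) (hsub ?_)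
    rw [ball_pi _ hε]
    exact hx

@[simp]
theorem perpVec_zero_apply (x : EuclideanSpace ℝ (Fin 2)) : perpVec x 0 = x 1 := rfl

@[simp]
theorem perpVec_one_apply (x : EuclideanSpace ℝ (Fin 2)) : perpVec x 1 = -x 0 := rfl

@[simp]
theorem polyGrad2_apply (q : MvPolynomial (Fin 2) ℝ) (x : EuclideanSpace ℝ (Fin 2)) (i : Fin 2) :
    polyGrad2 q x i = eval (fun j => x j) (pderiv i q) := rfl

/-- The linear map sending a polynomial to its gradient field. -/
noncomputable def gradField :
    MvPolynomial (Fin 2) ℝ →ₗ[ℝ] (EuclideanSpace ℝ (Fin 2) → EuclideanSpace ℝ (Fin 2)) where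
  toFun q x := polyGrad2 q x
  map_add' q r := by
    ext x i
    simp
  map_smul' c q := by
    ext x i
    simp [smul_eval]

/-- The linear map sending a polynomial `p` to the rotated Koszul field `x ↦ p(x) x^⊥`. -/
noncomputable def koszulField :
    MvPolynomial (Fin 2) ℝ →ₗ[ℝ] (EuclideanSpace ℝ (Fin 2) → EuclideanSpace ℝ (Fin 2)) where
  toFun p x := (eval (fun j => x j) p) • perpVec x
  map_add' p r := by
    ext x i
    simp [add_mul]
  map_smul' c p := by
    ext x i
    simp [smul_eval, mul_assoc]

theorem continuous_eval_euclidean (r : MvPolynomial (Fin 2) ℝ) :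
    Continuous fun x : EuclideanSpace ℝ (Fin 2) => eval (fun j => x j) r :=
  (MvPolynomial.continuous_eval r).comp (PiLp.continuous_ofLp 2 _)

theorem continuous_gradField (q : MvPolynomial (Fin 2) ℝ) : Continuous (gradField q) :=
  (PiLp.continuous_toLp 2 _).comp
    (continuous_pi fun i => continuous_eval_euclidean (pderiv i q))

theorem continuous_perpVec : Continuous perpVec := by
  refine (PiLp.continuous_toLp 2 _).comp (continuous_pi fun i => ?_)
  fin_cases i
  · exact (EuclideanSpace.proj (𝕜 := ℝ) (1 : Fin 2)).continuous
  · exact (EuclideanSpace.proj (𝕜 := ℝ) (0 : Fin 2)).continuous.neg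

theorem continuous_koszulField (p : MvPolynomial (Fin 2) ℝ) : Continuous (koszulField p) :=
  (continuous_eval_euclidean p).smul continuous_perpVec

/-- If a gradient field agrees with a rotated Koszul field near the origin, both vanish. -/
theorem gradField_koszulField_eq_zero {ρ : ℝ} (hρ : 0 < ρ) (q p : MvPolynomial (Fin 2) ℝ)
    (h : Set.EqOn (gradField q) (koszulField p) (Metric.ball 0 ρ)) :
    gradField q = 0 ∧ koszulField p = 0 := by
  have h0 : ∀ x ∈ Metric.ball (0 : EuclideanSpace ℝ (Fin 2)) ρ,
      eval (fun j => x j) (pderiv 0 q) = eval (fun j => x j) p * x 1 := fun x hx =>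
    congrArg (fun v : EuclideanSpace ℝ (Fin 2) => v 0) (h hx)
  have h1 : ∀ x ∈ Metric.ball (0 : EuclideanSpace ℝ (Fin 2)) ρ,
      eval (fun j => x j) (pderiv 1 q) = eval (fun j => x j) p * (-x 0) := fun x hx =>
    congrArg (fun v : EuclideanSpace ℝ (Fin 2) => v 1) (h hx)
  have hq : ∀ i, pderiv i q = 0 := by
    refine pderiv_eq_zero_of_sum_X_mul_pderiv_eq_zero q ?_
    refine eq_zero_of_eval_eq_zero_on_ball hρ _ fun x hx => ?_
    simp only [Fin.sum_univ_two, map_add, map_mul, eval_X, h0 x hx, h1 x hx]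
    ring
  have hp : p = 0 := by
    have hpX : p * X 1 = 0 := eq_zero_of_eval_eq_zero_on_ball hρ _ fun x hx => by
      rw [map_mul, eval_X, ← h0 x hx, hq, map_zero]
    exact (mul_eq_zero.mp hpX).resolve_right (X_ne_zero 1)
  constructor
  · ext x i
    simp [gradField, hq]
  · rw [hp, map_zero]

/-- A continuous function is integrable over any subset of a ball. -/
theorem integrable_restrict_of_continuous {f : EuclideanSpace ℝ (Fin 2) → ℝ} (hf : Continuous f)
    {T : Set (EuclideanSpace ℝ (Fin 2))} {r : ℝ} (hT : T ⊆ Metric.ball 0 r) :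
    Integrable f (volume.restrict T) :=
  (hf.continuousOn.integrableOn_compact (isCompact_closedBall 0 r)).mono_set
    (hT.trans Metric.ball_subset_closedBall)

/-- Coercivity of the difference of a gradient field and a rotated Koszul field, uniformly in the
domain of integration. -/
theorem exists_coercive_gradField_sub_koszulField (m n : ℕ) {ρ : ℝ} (hρ : 0 < ρ) :
    ∃ c : ℝ, 0 < c ∧ c ≤ 1 ∧ ∀ T : Set (EuclideanSpace ℝ (Fin 2)),
      Metric.ball 0 ρ ⊆ T → T ⊆ Metric.ball 0 1 →
      ∀ q p : MvPolynomial (Fin 2) ℝ, q.totalDegree ≤ m → p.totalDegree ≤ n →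
        c * ((∫ x in T, ‖gradField q x‖ ^ 2) + ∫ x in T, ‖koszulField p x‖ ^ 2) ≤
          ∫ x in T, ‖gradField q x - koszulField p x‖ ^ 2 := by
  let V : (restrictTotalDegree (Fin 2) ℝ m × restrictTotalDegree (Fin 2) ℝ n) →ₗ[ℝ]
      (EuclideanSpace ℝ (Fin 2) → EuclideanSpace ℝ (Fin 2)) :=
    gradField ∘ₗ (restrictTotalDegree (Fin 2) ℝ m).subtype ∘ₗ LinearMap.fst ℝ _ _
  let W : (restrictTotalDegree (Fin 2) ℝ m × restrictTotalDegree (Fin 2) ℝ n) →ₗ[ℝ]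
      (EuclideanSpace ℝ (Fin 2) → EuclideanSpace ℝ (Fin 2)) :=
    koszulField ∘ₗ (restrictTotalDegree (Fin 2) ℝ n).subtype ∘ₗ LinearMap.snd ℝ _ _
  have hVc : ∀ a, Continuous (V a) := fun a => continuous_gradField _
  have hWc : ∀ a, Continuous (W a) := fun a => continuous_koszulField _
  have hmem : ∀ {f : EuclideanSpace ℝ (Fin 2) → EuclideanSpace ℝ (Fin 2)}, Continuous f →
      ∀ r, MemLp f 2 (volume.restrict (Metric.ball 0 r)) := fun hf r =>
    (memLp_two_iff_integrable_sq_norm hf.aestronglyMeasurable).mpr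
      (integrable_restrict_of_continuous (hf.norm.pow 2) subset_rfl)
  have hzero : ∀ a, (V - W) a =ᵐ[volume.restrict (Metric.ball 0 ρ)] 0 → V a = 0 ∧ W a = 0 := by
    intro a ha
    have hon := Measure.eqOn_open_of_ae_eq ha Metric.isOpen_ball
      ((hVc a).sub (hWc a)).continuousOn continuous_zero.continuousOn
    exact gradField_koszulField_eq_zero hρ _ _ fun x hx => sub_eq_zero.mp (hon hx)
  obtain ⟨C, hC, hVC⟩ := exists_integral_norm_sq_le_of_ae_eq_zero_imp (V - W) V
    (fun a => hmem ((hVc a).sub (hWc a)) ρ) (fun a => hmem (hVc a) 1)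
    fun a ha => by rw [(hzero a ha).1]
  obtain ⟨D, hD, hWD⟩ := exists_integral_norm_sq_le_of_ae_eq_zero_imp (V - W) W
    (fun a => hmem ((hVc a).sub (hWc a)) ρ) (fun a => hmem (hWc a) 1)
    fun a ha => by rw [(hzero a ha).2]
  refine ⟨(C + D + 1)⁻¹, by positivity, inv_le_one_of_one_le₀ (by linarith), ?_⟩
  intro T hρT hT q p hq hp
  have hmono : ∀ {f : EuclideanSpace ℝ (Fin 2) → EuclideanSpace ℝ (Fin 2)}, Continuous f →
      ∀ {A B : Set (EuclideanSpace ℝ (Fin 2))}, A ⊆ B → B ⊆ Metric.ball 0 1 →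
      ∫ x in A, ‖f x‖ ^ 2 ≤ ∫ x in B, ‖f x‖ ^ 2 := fun hf A B hAB hB =>
    setIntegral_mono_set (integrable_restrict_of_continuous (hf.norm.pow 2) hB)
      (ae_of_all _ fun x => by positivity) hAB.eventuallyLE
  let a : restrictTotalDegree (Fin 2) ℝ m × restrictTotalDegree (Fin 2) ℝ n :=
    (⟨q, (mem_restrictTotalDegree _ _ _).mpr hq⟩, ⟨p, (mem_restrictTotalDegree _ _ _).mpr hp⟩)
  have h1 : ∫ x in T, ‖gradField q x‖ ^ 2 ≤
      C * ∫ x in Metric.ball 0 ρ, ‖gradField q x - koszulField p x‖ ^ 2 :=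
    (hmono (hVc a) hT subset_rfl).trans (hVC a)
  have h2 : ∫ x in T, ‖koszulField p x‖ ^ 2 ≤
      D * ∫ x in Metric.ball 0 ρ, ‖gradField q x - koszulField p x‖ ^ 2 :=
    (hmono (hWc a) hT subset_rfl).trans (hWD a)
  have h3 := hmono ((continuous_gradField q).sub (continuous_koszulField p)) hρT hT
  have h0 : 0 ≤ ∫ x in Metric.ball (0 : EuclideanSpace ℝ (Fin 2)) ρ,
      ‖gradField q x - koszulField p x‖ ^ 2 := integral_nonneg fun x => by positivity
  rw [inv_mul_le_iff₀ (by positivity)]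
  calc _ ≤ (C + D + 1) * ∫ x in Metric.ball 0 ρ, ‖gradField q x - koszulField p x‖ ^ 2 := by
        linarith
    _ ≤ _ := mul_le_mul_of_nonneg_left h3 (by positivity)

/-- Uniform bound `‖π_S π_{Sᶜ}‖ ≤ α < 1` for the two-dimensional gradient
space and its rotated Koszul complement, in normalized bilinear form: for every measurable
`T ⊆ ℝ²` with `B(0,ρ) ⊆ T ⊆ B(0,1)`, every polynomial `q` of total degree `≤ ℓ+1` and every
polynomial `p` of total degree `≤ ℓ−1`,
`|∫_T ⟨∇q, p x^⊥⟩| ≤ α (∫_T ‖∇q‖²)^{1/2} (∫_T ‖p x^⊥‖²)^{1/2}` with `x^⊥ = (x₂, −x₁)`. -/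
theorem grad2_koszul_projection_bound (ℓ : ℕ) (hℓ : 1 ≤ ℓ) (ρ : ℝ) (hρ0 : 0 < ρ) (hρ1 : ρ < 1) :
    ∃ α : ℝ, 0 ≤ α ∧ α < 1 ∧
      ∀ T : Set (EuclideanSpace ℝ (Fin 2)), MeasurableSet T →
        Metric.ball 0 ρ ⊆ T → T ⊆ Metric.ball 0 1 →
        ∀ q : MvPolynomial (Fin 2) ℝ, q.totalDegree ≤ ℓ + 1 →
        ∀ p : MvPolynomial (Fin 2) ℝ, p.totalDegree ≤ ℓ - 1 →
          abs (∫ x in T, ⟪polyGrad2 q x, (eval (fun j => x j) p) • perpVec x⟫_ℝ) ≤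
            α * Real.sqrt (∫ x in T, ‖polyGrad2 q x‖ ^ 2) *
              Real.sqrt (∫ x in T, ‖(eval (fun j => x j) p) • perpVec x‖ ^ 2) := by
  obtain ⟨c, hc0, hc1, hc⟩ := exists_coercive_gradField_sub_koszulField (ℓ + 1) (ℓ - 1) hρ0
  refine ⟨1 - c, by linarith, by linarith, fun T _ hρT hT q hq p hp => ?_⟩
  change |∫ x in T, ⟪gradField q x, koszulField p x⟫_ℝ| ≤
    (1 - c) * √(∫ x in T, ‖gradField q x‖ ^ 2) * √(∫ x in T, ‖koszulField p x‖ ^ 2)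
  have hv : Integrable (fun x => ‖gradField q x‖ ^ 2) (volume.restrict T) :=
    integrable_restrict_of_continuous ((continuous_gradField q).norm.pow 2) hT
  have hw : Integrable (fun x => ‖koszulField p x‖ ^ 2) (volume.restrict T) :=
    integrable_restrict_of_continuous ((continuous_koszulField p).norm.pow 2) hT
  have hvw := integrable_restrict_of_continuous
    ((continuous_gradField q).inner (𝕜 := ℝ) (continuous_koszulField p)) hT
  set A := ∫ x in T, ‖gradField q x‖ ^ 2 with hA
  set B := ∫ x in T, ‖koszulField p x‖ ^ 2 with hB
  set I := ∫ x in T, ⟪gradField q x, koszulField p x⟫_ℝ with hI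
  have hA0 : 0 ≤ A := integral_nonneg fun x => by positivity
  have hB0 : 0 ≤ B := integral_nonneg fun x => by positivity
  have hquad : ∀ t : ℝ, 0 ≤ (1 - c) * A * (t * t) + (-2 * I) * t + (1 - c) * B := by
    intro t
    have h := hc T hρT hT (t • q) p ((totalDegree_smul_le t q).trans hq) hp
    have hexp : ∀ x, ‖gradField (t • q) x - koszulField p x‖ ^ 2 =
        t ^ 2 * ‖gradField q x‖ ^ 2 - 2 * t * ⟪gradField q x, koszulField p x⟫_ℝ +
          ‖koszulField p x‖ ^ 2 := by
      intro x
      rw [map_smul, Pi.smul_apply, norm_sub_sq_real, norm_smul, real_inner_smul_left, mul_pow,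
        Real.norm_eq_abs, sq_abs]
      ring
    have hscale : ∀ x, ‖gradField (t • q) x‖ ^ 2 = t ^ 2 * ‖gradField q x‖ ^ 2 := by
      intro x
      rw [map_smul, Pi.smul_apply, norm_smul, mul_pow, Real.norm_eq_abs, sq_abs]
    simp only [hexp, hscale] at h
    rw [integral_add ((hv.const_mul _).sub' (hvw.const_mul _)) hw,
      integral_sub (hv.const_mul _) (hvw.const_mul _),
      integral_const_mul, integral_const_mul, ← hA, ← hB, ← hI] at h
    linarith
  have hdisc := discrim_le_zero hquad
  rw [discrim] at hdisc
  rw [mul_assoc, ← Real.sqrt_mul hA0]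
  refine abs_le_of_sq_le_sq ?_ (mul_nonneg (by linarith) (Real.sqrt_nonneg _))
  rw [mul_pow, Real.sq_sqrt (mul_nonneg hA0 hB0)]
  linarith
end
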